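/- arXiv:1401.2073 — 2 statements merged into one kernel-verified Lean document; each statement's English description precedes it below -/
import Mathlib

section
/- For m ≥ 1 define G_m := 4k⁴(α+β+m+1/2)(α+β+m−3/2)·β_m·β_{m−1} + 4k⁴(α+β+m+3/2)(α+β+m−1/2)·β_{m+1}·β_m + 8k⁴(α+β+m+1/2)(α+β+m−1/2)·β_m² − 4k²(k²+1)(α+β+m+1/2)(α+β+m−1/2)·β_m + (α·k²+β)² + k²·m·(m+2α+2β). Then for every integer n ≥ 1 the recurrence coefficients satisfy the third-order nonlinear difference equation 16k⁴(α+β+n+1/2)²·(β_{n+1}−β_n)²·G_n = [G_{n+1} − G_n − 4k⁴(α+β+n+1/2)²·(β_{n+1}−β_n)²]², an equation relating β_{n−1}, β_n, β_{n+1}, β_{n+2}. -/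
open MeasureTheory

/-- The auxiliary quantity `G_m` appearing in the third-order difference equation. -/
noncomputable def Gaux (α β k2 : ℝ) (b : ℕ → ℝ) (m : ℕ) : ℝ :=
  4 * k2 ^ 2 * (α + β + (m:ℝ) + 1/2) * (α + β + (m:ℝ) - 3/2) * b m * b (m - 1)
  + 4 * k2 ^ 2 * (α + β + (m:ℝ) + 3/2) * (α + β + (m:ℝ) - 1/2) * b (m + 1) * b m
  + 8 * k2 ^ 2 * (α + β + (m:ℝ) + 1/2) * (α + β + (m:ℝ) - 1/2) * b m ^ 2
  - 4 * k2 * (k2 + 1) * (α + β + (m:ℝ) + 1/2) * (α + β + (m:ℝ) - 1/2) * b m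
  + (α * k2 + β) ^ 2 + k2 * (m:ℝ) * ((m:ℝ) + 2 * α + 2 * β)

open Polynomial in
/-- A linear functional `L` on polynomials together with its monic orthogonal polynomials `P`,
squared norms `h` and recurrence coefficients `b`, in the symmetric case. -/
structure IsSymmetricOrthogonal (L : ℝ[X] →ₗ[ℝ] ℝ) (P : ℕ → ℝ[X]) (h b : ℕ → ℝ) : Prop where
  monic : ∀ n, (P n).Monic
  natDegree : ∀ n, (P n).natDegree = n
  orth : ∀ m n, L (P m * P n) = if m = n then h n else 0
  b_zero : b 0 = 0
  recurrence : ∀ n, X * P n = P (n + 1) + C (b n) * P (n - 1)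

/-- The subleading coefficient of the `n`-th orthogonal polynomial, in terms of the recurrence
coefficients. -/
noncomputable def subleading (b : ℕ → ℝ) (n : ℕ) : ℝ := -∑ j ∈ Finset.range n, b j

theorem subleading_succ (b : ℕ → ℝ) (n : ℕ) :
    subleading b (n + 1) = subleading b n - b n := by
  simp only [subleading, Finset.sum_range_succ]
  ring

open Polynomial in
theorem coeff_X_mul_derivative (p : ℝ[X]) (n : ℕ) :
    (X * derivative p).coeff n = n * p.coeff n := by
  cases n with
  | zero => simp
  | succ n => rw [coeff_X_mul, coeff_derivative]; push_cast; ring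

namespace IsSymmetricOrthogonal

open Polynomial

variable {L : ℝ[X] →ₗ[ℝ] ℝ} {P : ℕ → ℝ[X]} {h b : ℕ → ℝ}

theorem zero_eq (H : IsSymmetricOrthogonal L P h b) : P 0 = 1 :=
  (H.monic 0).natDegree_eq_zero.mp (H.natDegree 0)

theorem one_eq (H : IsSymmetricOrthogonal L P h b) : P 1 = X := by
  have := H.recurrence 0
  simpa [H.b_zero, H.zero_eq] using this.symm

theorem coeff_self (H : IsSymmetricOrthogonal L P h b) (n : ℕ) : (P n).coeff n = 1 := by
  have := (H.monic n).coeff_natDegree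
  rwa [H.natDegree] at this

theorem coeff_of_lt (H : IsSymmetricOrthogonal L P h b) {n m : ℕ} (hm : n < m) :
    (P n).coeff m = 0 :=
  coeff_eq_zero_of_natDegree_lt (by rwa [H.natDegree])

theorem coeff_pred (H : IsSymmetricOrthogonal L P h b) (n : ℕ) : (P (n + 1)).coeff n = 0 := by
  induction n with
  | zero => simp [H.one_eq]
  | succ n ih =>
    have := congrArg (fun p => p.coeff (n + 1)) (H.recurrence (n + 1))
    simp only [coeff_X_mul, coeff_add, coeff_C_mul, Nat.add_sub_cancel,
      H.coeff_of_lt (Nat.lt_succ_self n), ih] at this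
    linarith

theorem coeff_sub_two (H : IsSymmetricOrthogonal L P h b) (n : ℕ) :
    (P (n + 2)).coeff n = subleading b (n + 2) := by
  induction n with
  | zero =>
    have := congrArg (fun p => p.coeff 0) (H.recurrence 1)
    simp [H.zero_eq] at this
    simp [subleading, Finset.sum_range_succ, H.b_zero]
    linarith
  | succ n ih =>
    have := congrArg (fun p => p.coeff (n + 1)) (H.recurrence (n + 2))
    simp only [coeff_X_mul, coeff_add, coeff_C_mul, show n + 2 - 1 = n + 1 by omega,
      H.coeff_self, ih] at this
    rw [show n + 1 + 2 = n + 2 + 1 by ring, subleading_succ]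
    linarith

theorem apply_mul_eq_zero (H : IsSymmetricOrthogonal L P h b) (m : ℕ) :
    ∀ (n : ℕ) (q : ℝ[X]), n ≤ m → (∀ j, n ≤ j → q.coeff j = 0) → L (P m * q) = 0 := by
  intro n
  induction n with
  | zero =>
    intro q _ hq
    have : q = 0 := by ext j; simpa using hq j (Nat.zero_le j)
    simp [this]
  | succ n ih =>
    intro q hn hq
    have key := ih (q - C (q.coeff n) * P n) (by omega) (by
      intro j hj
      rcases Nat.eq_or_lt_of_le hj with rfl | hj
      · simp [H.coeff_self]
      · simp [hq j hj, H.coeff_of_lt hj])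
    have e : P m * q = P m * (q - C (q.coeff n) * P n) + q.coeff n • (P m * P n) := by
      rw [smul_eq_C_mul]; ring
    rw [e, map_add, key, map_smul, H.orth, if_neg (by omega)]
    simp

theorem apply_mul (H : IsSymmetricOrthogonal L P h b) (m : ℕ) (q : ℝ[X])
    (hq : ∀ j, m + 2 < j → q.coeff j = 0) (hq1 : q.coeff (m + 1) = 0) :
    L (P m * q) = h m * (q.coeff m - q.coeff (m + 2) * subleading b (m + 2)) := by
  set u := q.coeff (m + 2) with hu
  set v := q.coeff m - u * subleading b (m + 2) with hv
  have key := H.apply_mul_eq_zero m m (q - C u * P (m + 2) - C v * P m) le_rfl (by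
    intro j hj
    rcases Nat.eq_or_lt_of_le hj with rfl | hj
    · rw [coeff_sub, coeff_sub, coeff_C_mul, coeff_C_mul, H.coeff_self, H.coeff_sub_two, hv]
      ring
    rcases Nat.eq_or_lt_of_le (Nat.succ_le_of_lt hj) with rfl | hj
    · simp [hq1, H.coeff_pred (m + 1), H.coeff_of_lt]
    rcases Nat.eq_or_lt_of_le (Nat.succ_le_of_lt hj) with rfl | hj
    · simp [H.coeff_self, H.coeff_of_lt, hu]
    · simp [hq j hj, H.coeff_of_lt (show m < j by omega), H.coeff_of_lt (show m + 2 < j from hj)])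
  have e : P m * q = P m * (q - C u * P (m + 2) - C v * P m) + u • (P m * P (m + 2))
      + v • (P m * P m) := by
    simp only [smul_eq_C_mul]; ring
  rw [e, map_add, map_add, key, map_smul, map_smul, H.orth, H.orth, if_neg (by omega), if_pos rfl]
  simp [mul_comm]

theorem norm_succ (H : IsSymmetricOrthogonal L P h b) (n : ℕ) : h (n + 1) = b (n + 1) * h n := by
  have e : P (n + 1) * P (n + 1) + b n • (P (n + 1) * P (n - 1))
      = P (n + 2) * P n + b (n + 1) • (P n * P n) := by
    have e1 := H.recurrence n
    have e2 := H.recurrence (n + 1)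
    rw [Nat.add_sub_cancel] at e2
    simp only [smul_eq_C_mul]
    linear_combination P n * e2 - P (n + 1) * e1
  have := congrArg L e
  simpa [H.orth, show n + 1 ≠ n - 1 by omega] using this

theorem apply_X_sq (H : IsSymmetricOrthogonal L P h b) (n : ℕ) :
    L (X ^ 2 * (P n * P n)) = h n * (b (n + 1) + b n) := by
  have e : X ^ 2 * (P n * P n) = P (n + 1) * P (n + 1) + (2 * b n) • (P (n + 1) * P (n - 1))
      + (b n ^ 2) • (P (n - 1) * P (n - 1)) := by
    simp only [smul_eq_C_mul, C_mul, C_pow, C_ofNat]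
    linear_combination (X * P n + (P (n + 1) + C (b n) * P (n - 1))) * H.recurrence n
  rw [e]
  simp only [map_add, map_smul, H.orth, if_neg (show n + 1 ≠ n - 1 by omega), if_true,
    smul_eq_mul, H.norm_succ n]
  cases n with
  | zero => simp [H.b_zero]; ring
  | succ n => rw [Nat.add_sub_cancel, H.norm_succ n]; ring

theorem apply_X_pow_four (H : IsSymmetricOrthogonal L P h b) (n : ℕ) :
    L (X ^ 4 * (P n * P n)) = h n * (b (n + 1) * b (n + 2) + (b (n + 1) + b n) ^ 2
      + b n * b (n - 1)) := by
  have e : X ^ 4 * (P n * P n) = X ^ 2 * (P (n + 1) * P (n + 1))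
      + (2 * b n) • (P (n + 1) * (X ^ 2 * P (n - 1)))
      + (b n ^ 2) • (X ^ 2 * (P (n - 1) * P (n - 1))) := by
    simp only [smul_eq_C_mul, C_mul, C_pow, C_ofNat]
    linear_combination
      X ^ 2 * (X * P n + (P (n + 1) + C (b n) * P (n - 1))) * H.recurrence n
  rw [e]
  simp only [map_add, map_smul, smul_eq_mul, H.apply_X_sq, H.norm_succ n]
  cases n with
  | zero => simp [H.b_zero]; ring
  | succ n =>
    have e : P (n + 2) * (X ^ 2 * P n) = P (n + 2) * P (n + 2)
        + (b (n + 1)) • (P (n + 2) * P n) + b n • (P (n + 2) * (X * P (n - 1))) := by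
      have e1 := H.recurrence n
      have e2 := H.recurrence (n + 1)
      rw [Nat.add_sub_cancel] at e2
      simp only [smul_eq_C_mul]
      linear_combination P (n + 2) * (X * e1 + e2)
    have e0 : L (P (n + 2) * (X * P (n - 1))) = 0 := by
      refine H.apply_mul_eq_zero (n + 2) (n + 2) _ le_rfl fun j hj => ?_
      obtain ⟨i, rfl⟩ : ∃ i, j = i + 1 := ⟨j - 1, by omega⟩
      rw [coeff_X_mul, H.coeff_of_lt (by omega)]
    simp only [Nat.add_sub_cancel]
    rw [show n + 1 + 1 = n + 2 from rfl, e]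
    simp only [map_add, map_smul, smul_eq_mul, e0, H.orth, if_true,
      if_neg (show n + 2 ≠ n by omega), H.norm_succ (n + 1), H.norm_succ n,
      show n + 1 + 1 = n + 2 from rfl, show n + 1 + 2 = n + 3 from rfl]
    ring

theorem coeff_X_sq_mul (H : IsSymmetricOrthogonal L P h b) (n : ℕ) (u v : ℝ) :
    (X ^ 2 * (C u * (X * derivative (P n)) + C v * P n)).coeff n
      = (u * (n - 2) + v) * subleading b n := by
  match n with
  | 0 => simp [subleading]
  | 1 => simp [subleading, coeff_X_pow_mul', H.b_zero]
  | n + 2 =>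
    rw [coeff_X_pow_mul, coeff_add, coeff_C_mul, coeff_C_mul, coeff_X_mul_derivative,
      H.coeff_sub_two]
    push_cast; ring

theorem coeff_combination (H : IsSymmetricOrthogonal L P h b) (n : ℕ) (u v : ℝ) {j : ℕ}
    (hj : n ≤ j + 1) (hjn : j ≠ n) :
    (C u * (X * derivative (P n)) + C v * P n).coeff j = 0 := by
  have : (P n).coeff j = 0 := by
    rcases Nat.lt_or_ge n j with hlt | hge
    · exact H.coeff_of_lt hlt
    · obtain rfl : n = j + 1 := by omega
      exact H.coeff_pred j
  rw [coeff_add, coeff_C_mul, coeff_C_mul, coeff_X_mul_derivative, this]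
  simp

theorem coeff_combination_self (H : IsSymmetricOrthogonal L P h b) (n : ℕ) (u v : ℝ) :
    (C u * (X * derivative (P n)) + C v * P n).coeff n = u * n + v := by
  rw [coeff_add, coeff_C_mul, coeff_C_mul, coeff_X_mul_derivative, H.coeff_self]
  ring

/-- Pairing of `P (n + 1)` with a combination of `P n` and its derivative whose coefficients are
even, respectively odd, polynomials. -/
theorem apply_mul_derivative (H : IsSymmetricOrthogonal L P h b) (n : ℕ) (r s t u v : ℝ) :
    L (P (n + 1) * ((C r + C s * X ^ 2 + C u * X ^ 4) * derivative (P n)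
        + (C t * X + C v * X ^ 3) * P n))
      = h (n + 1) * (s * n + t + (u * (n - 2) + v) * subleading b n
          - (u * n + v) * subleading b (n + 3)) := by
  set A := C s * (X * derivative (P n)) + C t * P n with hA
  set B := C u * (X * derivative (P n)) + C v * P n with hB
  have e : (C r + C s * X ^ 2 + C u * X ^ 4) * derivative (P n) + (C t * X + C v * X ^ 3) * P n
      = C r * derivative (P n) + X * A + X * (X ^ 2 * B) := by
    rw [hA, hB]; ring
  rw [e]
  have hd : ∀ j, n ≤ j → (derivative (P n)).coeff j = 0 := fun j hj => by
    rw [coeff_derivative, H.coeff_of_lt (by omega), zero_mul]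
  have hc : ∀ j, n ≤ j → (C r * derivative (P n) + X * A + X * (X ^ 2 * B)).coeff (j + 1)
      = A.coeff j + (X ^ 2 * B).coeff j := fun j hj => by
    rw [coeff_add, coeff_add, coeff_C_mul, hd _ (by omega), coeff_X_mul, coeff_X_mul]
    ring
  have hA0 : ∀ j, n < j → A.coeff j = 0 := fun j hj =>
    H.coeff_combination n s t (by omega) (by omega)
  rw [H.apply_mul (n + 1)]
  · rw [hc n le_rfl, show n + 1 + 2 = n + 2 + 1 by ring, hc (n + 2) (by omega),
      hA0 (n + 2) (by omega), coeff_X_pow_mul, H.coeff_X_sq_mul,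
      H.coeff_combination_self, H.coeff_combination_self]
    ring
  · intro j hj
    obtain ⟨i, rfl⟩ : ∃ i, j = i + 2 + 1 := ⟨j - 3, by omega⟩
    rw [hc _ (by omega), hA0 _ (by omega), coeff_X_pow_mul,
      H.coeff_combination n u v (by omega) (by omega), add_zero]
  · rw [hc _ (by omega), hA0 _ (by omega), zero_add, coeff_X_pow_mul']
    split_ifs
    · exact H.coeff_combination n u v (by omega) (by omega)
    · rfl

/-- The diagonal discrete equation implied by the Pearson equation for the weight
`(1 - x²)^α (1 - κ x²)^β`. -/
theorem pearson_recurrence (H : IsSymmetricOrthogonal L P h b) {α β κ : ℝ}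
    (hh : ∀ n, h n ≠ 0)
    (hL : ∀ p : ℝ[X], L ((C 1 + C (-(1 + κ)) * X ^ 2 + C κ * X ^ 4) * derivative p
      + (C (-(2 * (1 + κ) + 2 * (α + β * κ))) * X + C (4 * κ + 2 * κ * (α + β)) * X ^ 3) * p) = 0)
    (n : ℕ) :
    1 - (1 + κ) * (b (n + 1) + b n)
      + κ * (b (n + 1) * b (n + 2) + (b (n + 1) + b n) ^ 2 + b n * b (n - 1))
      + b (n + 1) * (2 * (-2 * κ * subleading b n
          + κ * (n + 2 + α + β) * (b n + b (n + 1) + b (n + 2)) - (1 + κ) * (n + 1)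
          - (α + β * κ)))
      - b n * (2 * (-2 * κ * (subleading b n + b (n - 1))
          + κ * (n + 1 + α + β) * (b (n - 1) + b n + b (n + 1)) - (1 + κ) * n
          - (α + β * κ))) = 0 := by
  set σ : ℝ[X] := C 1 + C (-(1 + κ)) * X ^ 2 + C κ * X ^ 4 with hσ
  have diff (n : ℕ) : L (P (n + 1) * (σ * derivative (P n)))
      - L (P n * (σ * derivative (P (n + 1))))
      = h (n + 1) * (2 * (-2 * κ * subleading b n
          + κ * (n + 2 + α + β) * (b n + b (n + 1) + b (n + 2)) - (1 + κ) * (n + 1)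
          - (α + β * κ))) := by
    have e1 := hL (P (n + 1) * P n)
    have e2 := H.apply_mul_derivative n 2 (-2 * (1 + κ)) (-(2 * (1 + κ) + 2 * (α + β * κ)))
      (2 * κ) (4 * κ + 2 * κ * (α + β))
    rw [subleading_succ, subleading_succ, subleading_succ] at e2
    have e3 : P (n + 1) * ((C 2 + C (-2 * (1 + κ)) * X ^ 2 + C (2 * κ) * X ^ 4) * derivative (P n)
        + (C (-(2 * (1 + κ) + 2 * (α + β * κ))) * X + C (4 * κ + 2 * κ * (α + β)) * X ^ 3) * P n)
        = P (n + 1) * (σ * derivative (P n)) - P n * (σ * derivative (P (n + 1)))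
          + (σ * derivative (P (n + 1) * P n)
            + (C (-(2 * (1 + κ) + 2 * (α + β * κ))) * X
              + C (4 * κ + 2 * κ * (α + β)) * X ^ 3) * (P (n + 1) * P n)) := by
      have c1 : C (2 : ℝ) = 2 * C 1 := by rw [← C_ofNat, ← C_mul]; norm_num
      have c2 : C (-2 * (1 + κ)) = 2 * C (-(1 + κ)) := by rw [← C_ofNat, ← C_mul]; congr 1; ring
      have c3 : C (2 * κ) = 2 * C κ := by rw [C_mul, C_ofNat]
      rw [derivative_mul, c1, c2, c3, hσ]
      ring
    rw [e3, map_add, e1, map_sub, add_zero] at e2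
    rw [e2]
    ring
  have hS : L (σ * (P n * P n)) = h n * (1 - (1 + κ) * (b (n + 1) + b n)
      + κ * (b (n + 1) * b (n + 2) + (b (n + 1) + b n) ^ 2 + b n * b (n - 1))) := by
    have e : σ * (P n * P n) = P n * P n + (-(1 + κ)) • (X ^ 2 * (P n * P n))
        + κ • (X ^ 4 * (P n * P n)) := by
      simp only [smul_eq_C_mul, hσ, map_one]; ring
    rw [e]
    simp only [map_add, map_smul, smul_eq_mul, H.apply_X_sq, H.apply_X_pow_four, H.orth, if_true]
    ring
  have compat : σ * (P n * P n) + P (n + 1) * (σ * derivative (P n))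
      - P n * (σ * derivative (P (n + 1)))
      + b n • (P (n - 1) * (σ * derivative (P n)) - P n * (σ * derivative (P (n - 1)))) = 0 := by
    have e1 := H.recurrence n
    have e2 := congrArg derivative e1
    simp only [derivative_mul, derivative_X, derivative_add, derivative_C] at e2
    simp only [smul_eq_C_mul]
    linear_combination σ * P n * e2 - σ * derivative (P n) * e1
  have key := congrArg L compat
  simp only [map_add, map_sub, map_smul, map_zero, smul_eq_mul, hS] at key
  have hd := diff n
  rw [H.norm_succ] at hd
  apply mul_left_cancel₀ (hh n)
  rw [mul_zero]
  cases n with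
  | zero =>
    simp only [H.b_zero] at key hd ⊢
    linear_combination key - hd
  | succ n =>
    have hd' := diff n
    simp only [Nat.add_sub_cancel, subleading_succ] at key hd hd' ⊢
    push_cast at key hd hd' ⊢
    linear_combination key - hd + b (n + 1) * hd'

end IsSymmetricOrthogonal

/-- `Gaux` is the square of an explicit linear expression in the recurrence coefficients. -/
theorem Gaux_eq_sq {α β κ : ℝ} {b : ℕ → ℝ} (hb : b 0 = 0)
    (hR : ∀ n : ℕ, 1 - (1 + κ) * (b (n + 1) + b n)
      + κ * (b (n + 1) * b (n + 2) + (b (n + 1) + b n) ^ 2 + b n * b (n - 1))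
      + b (n + 1) * (2 * (-2 * κ * subleading b n
          + κ * (n + 2 + α + β) * (b n + b (n + 1) + b (n + 2)) - (1 + κ) * (n + 1)
          - (α + β * κ)))
      - b n * (2 * (-2 * κ * (subleading b n + b (n - 1))
          + κ * (n + 1 + α + β) * (b (n - 1) + b n + b (n + 1)) - (1 + κ) * n
          - (α + β * κ))) = 0) (n : ℕ) :
    Gaux α β κ b n
      = (2 * κ * ((α + β + n - 1/2) * b n + subleading b n) - (α * κ + β)) ^ 2 := by
  induction n with
  | zero => simp [Gaux, hb, subleading]; ring
  | succ n ih =>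
    simp only [Gaux, Nat.add_sub_cancel, subleading_succ] at ih ⊢
    rw [show n + 1 + 1 = n + 2 from rfl]
    push_cast
    linear_combination ih + 2 * κ * (α + β + n + 1/2) * hR n

section Weight

variable {α β κ : ℝ} {w : ℝ → ℝ}

theorem weight_hasDerivAt (hκ : κ ∈ Set.Ioo (0:ℝ) 1) (p : Polynomial ℝ) {x : ℝ}
    (hx : x ∈ Set.Ioo (-1:ℝ) 1) :
    HasDerivAt (fun x => (1 - x ^ 2) ^ (α + 1) * (1 - κ * x ^ 2) ^ (β + 1) * p.eval x)
      (((1 - (1 + κ) * x ^ 2 + κ * x ^ 4) * p.derivative.eval x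
        + (-(2 * (1 + κ) + 2 * (α + β * κ)) * x + (4 * κ + 2 * κ * (α + β)) * x ^ 3) * p.eval x)
        * ((1 - x ^ 2) ^ α * (1 - κ * x ^ 2) ^ β)) x := by
  have h1 : 0 < 1 - x ^ 2 := by nlinarith [hx.1, hx.2]
  have h2 : 0 < 1 - κ * x ^ 2 := by nlinarith [hκ.1, hκ.2, sq_nonneg x]
  have d1 : HasDerivAt (fun x : ℝ => 1 - x ^ 2) (-(2 * x)) x := by
    simpa using (hasDerivAt_pow 2 x).const_sub 1
  have d2 : HasDerivAt (fun x : ℝ => 1 - κ * x ^ 2) (-(κ * (2 * x))) x := by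
    simpa using ((hasDerivAt_pow 2 x).const_mul κ).const_sub 1
  have d := ((d1.rpow_const (p := α + 1) (Or.inl h1.ne')).mul
    (d2.rpow_const (p := β + 1) (Or.inl h2.ne'))).mul (p.hasDerivAt x)
  refine d.congr_deriv ?_
  simp only [Pi.mul_apply, add_sub_cancel_right, Real.rpow_add_one h1.ne',
    Real.rpow_add_one h2.ne']
  ring

theorem weight_continuousOn (hα : -1 < α) (hκ : κ ∈ Set.Ioo (0:ℝ) 1) (p : Polynomial ℝ) :
    ContinuousOn (fun x => (1 - x ^ 2) ^ (α + 1) * (1 - κ * x ^ 2) ^ (β + 1) * p.eval x)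
      (Set.Icc (-1) 1) := by
  refine ContinuousOn.mul (ContinuousOn.mul ?_ ?_) p.continuous.continuousOn
  · exact ContinuousOn.rpow_const (by fun_prop) fun x _ => Or.inr (by linarith)
  · refine ContinuousOn.rpow_const (by fun_prop) fun x hx => Or.inl ?_
    have h1 : 0 ≤ 1 - x ^ 2 := by nlinarith [hx.1, hx.2]
    have h2 : 0 < 1 - κ * x ^ 2 := by nlinarith [hκ.1, hκ.2, sq_nonneg x]
    exact h2.ne'

theorem intervalIntegrable_eval_mul (hw : IntervalIntegrable w volume (-1) 1) (p : Polynomial ℝ) :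
    IntervalIntegrable (fun x => p.eval x * w x) volume (-1) 1 :=
  hw.continuousOn_mul p.continuous.continuousOn

/-- Integration against an integrable weight on `[-1, 1]`, as a functional on polynomials. -/
noncomputable def weightFunctional (hw : IntervalIntegrable w volume (-1) 1) :
    Polynomial ℝ →ₗ[ℝ] ℝ where
  toFun p := ∫ x in (-1:ℝ)..1, p.eval x * w x
  map_add' p q := by
    rw [← intervalIntegral.integral_add (intervalIntegrable_eval_mul hw p)
      (intervalIntegrable_eval_mul hw q)]
    simp only [Polynomial.eval_add, add_mul]
  map_smul' c p := by
    rw [RingHom.id_apply, smul_eq_mul, ← intervalIntegral.integral_const_mul]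
    simp only [Polynomial.eval_smul, smul_eq_mul, mul_assoc]

theorem weightFunctional_apply (hw : IntervalIntegrable w volume (-1) 1) (p : Polynomial ℝ) :
    weightFunctional hw p = ∫ x in (-1:ℝ)..1, p.eval x * w x := rfl

theorem weightFunctional_X (hw : IntervalIntegrable w volume (-1) 1) (heven : w.Even) :
    weightFunctional hw Polynomial.X = 0 := by
  have := intervalIntegral.integral_comp_neg (a := (-1:ℝ)) (b := 1) (fun x => x * w x)
  simp only [heven _, neg_mul, intervalIntegral.integral_neg, neg_neg] at this
  simp only [weightFunctional_apply, Polynomial.eval_X]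
  linarith

open Polynomial in
theorem weightFunctional_pearson (hα : -1 < α) (hκ : κ ∈ Set.Ioo (0:ℝ) 1)
    (hwdef : ∀ x : ℝ, w x = (1 - x ^ 2) ^ α * (1 - κ * x ^ 2) ^ β)
    (hw : IntervalIntegrable w volume (-1) 1) (p : ℝ[X]) :
    weightFunctional hw ((C 1 + C (-(1 + κ)) * X ^ 2 + C κ * X ^ 4) * derivative p
      + (C (-(2 * (1 + κ) + 2 * (α + β * κ))) * X + C (4 * κ + 2 * κ * (α + β)) * X ^ 3) * p)
      = 0 := by
  rw [weightFunctional_apply, intervalIntegral.integral_eq_sub_of_hasDerivAt_of_le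
    (by norm_num) (weight_continuousOn (β := β) hα hκ p) _ (intervalIntegrable_eval_mul hw _)]
  · simp [Real.zero_rpow (show α + 1 ≠ 0 by linarith)]
  · intro x hx
    refine (weight_hasDerivAt hκ p hx).congr_deriv ?_
    rw [hwdef]
    simp only [eval_add, eval_mul, eval_C, eval_pow, eval_X]
    ring

end Weight

/-- The recurrence coefficients `β_n` satisfy the third-order
nonlinear difference equation
`16k⁴(α+β+n+1/2)²(β_{n+1}−β_n)²·G_n = (G_{n+1} − G_n − 4k⁴(α+β+n+1/2)²(β_{n+1}−β_n)²)²`. -/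
theorem stmt_1
    (α β k2 : ℝ) (hα : -1 < α) (hk2 : k2 ∈ Set.Ioo (0:ℝ) 1)
    (w : ℝ → ℝ)
    (hw : ∀ x : ℝ, w x = (1 - x ^ 2) ^ α * (1 - k2 * x ^ 2) ^ β)
    (P : ℕ → Polynomial ℝ)
    (hPmonic : ∀ n, (P n).Monic)
    (hPdeg : ∀ n, (P n).natDegree = n)
    (h : ℕ → ℝ) (hpos : ∀ n, 0 < h n)
    (horth : ∀ m n : ℕ,
      (∫ x in (-1:ℝ)..1, (P m).eval x * (P n).eval x * w x)
        = if m = n then h n else 0)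
    (b : ℕ → ℝ) (hb0 : b 0 = 0)
    (hrec : ∀ n : ℕ, 1 ≤ n →
      Polynomial.X * P n = P (n + 1) + Polynomial.C (b n) * P (n - 1)) :
    ∀ n : ℕ, 1 ≤ n →
      16 * k2 ^ 2 * (α + β + (n:ℝ) + 1/2) ^ 2 * (b (n + 1) - b n) ^ 2
          * Gaux α β k2 b n
        = (Gaux α β k2 b (n + 1) - Gaux α β k2 b n
            - 4 * k2 ^ 2 * (α + β + (n:ℝ) + 1/2) ^ 2 * (b (n + 1) - b n) ^ 2) ^ 2 := by
  have hP0 : P 0 = 1 := (hPmonic 0).natDegree_eq_zero.mp (hPdeg 0)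
  have hwint : IntervalIntegrable w volume (-1) 1 := by
    apply intervalIntegral.intervalIntegrable_of_integral_ne_zero
    have := horth 0 0
    simp only [hP0, Polynomial.eval_one, one_mul, if_true] at this
    rw [this]
    exact (hpos 0).ne'
  have heven : w.Even := fun x => by simp [hw]
  have horthL : ∀ m n, weightFunctional hwint (P m * P n) = if m = n then h n else 0 := by
    intro m n
    simp only [weightFunctional_apply, Polynomial.eval_mul, horth]
  have hP1 : P 1 = Polynomial.X := by
    have e : P 1 = Polynomial.X + Polynomial.C ((P 1).coeff 0) :=
      (hPmonic 1).eq_X_add_C (hPdeg 1)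
    have h10 := horthL 1 0
    have h00 := horthL 0 0
    rw [hP0, mul_one, e, map_add, weightFunctional_X hwint heven, if_neg one_ne_zero, zero_add,
      ← mul_one (Polynomial.C _), ← Polynomial.smul_eq_C_mul, map_smul, smul_eq_mul] at h10
    rw [hP0, mul_one, if_pos rfl] at h00
    rw [h00] at h10
    rw [e, (mul_eq_zero.mp h10).resolve_right (hpos 0).ne', Polynomial.C_0, add_zero]
  have H : IsSymmetricOrthogonal (weightFunctional hwint) P h b :=
    { monic := hPmonic
      natDegree := hPdeg
      orth := horthL
      b_zero := hb0
      recurrence := fun n => by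
        rcases Nat.eq_zero_or_pos n with rfl | hn
        · simp [hP0, hP1, hb0]
        · exact hrec n hn }
  have hG := Gaux_eq_sq hb0 (H.pearson_recurrence (fun n => (hpos n).ne')
    (weightFunctional_pearson hα hk2 hw hwint))
  intro n _
  rw [hG, hG, subleading_succ]
  push_cast
  ring
end

section
/- Define, for n ≥ 0, C_n := 2(α+β+n+3/2)·k²·(β_n+β_{n+1}) − 2[(β+n+1/2)k² + (α+n+1/2)] − 4k²·p1(n). Then for every integer n ≥ 2 one has the generalized Rees difference equation β_{n−1}·C_{n−2} = β_n·C_n + 1. -/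
open MeasureTheory

/-- The quantity `C_n` appearing in the generalized Rees difference equation. -/
noncomputable def Caux (α β k2 : ℝ) (b p1 : ℕ → ℝ) (n : ℕ) : ℝ :=
  2 * (α + β + (n:ℝ) + 3/2) * k2 * (b n + b (n + 1))
    - 2 * ((β + (n:ℝ) + 1/2) * k2 + (α + (n:ℝ) + 1/2))
    - 4 * k2 * p1 n

open Polynomial in
/-- The linear functional `p ↦ ∫ p w` on polynomials attached to an integrable weight. -/
noncomputable def momentFunctional (w : ℝ → ℝ) (hw : IntervalIntegrable w volume (-1) 1) :
    ℝ[X] →ₗ[ℝ] ℝ where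
  toFun p := ∫ x in (-1:ℝ)..1, p.eval x * w x
  map_add' p q := by
    rw [← intervalIntegral.integral_add (hw.continuousOn_mul p.continuous.continuousOn)
      (hw.continuousOn_mul q.continuous.continuousOn)]
    simp only [eval_add, add_mul]
  map_smul' c p := by
    simp only [eval_smul, smul_eq_mul, mul_assoc, RingHom.id_apply,
      intervalIntegral.integral_const_mul]

namespace ReesEquation

open Polynomial

/-- The polynomial `σ(x) = (1 - x²)(1 - k²x²)` of the Pearson equation `(σ w)' = 2 τ w`. -/
noncomputable def sigma (k2 : ℝ) : ℝ[X] := (1 - X ^ 2) * (1 - C k2 * X ^ 2)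

/-- The polynomial `τ` of the Pearson equation `(σ w)' = 2 τ w`. -/
noncomputable def tau (α β k2 : ℝ) : ℝ[X] :=
  -(C (α + 1) * X * (1 - C k2 * X ^ 2)) - C ((β + 1) * k2) * X * (1 - X ^ 2)

/-- The operator `σ d/dx + τ`, antisymmetric with respect to the weight. -/
noncomputable def pearsonOp (α β k2 : ℝ) (f : ℝ[X]) : ℝ[X] :=
  sigma k2 * derivative f + tau α β k2 * f

lemma map_C_mul (L : ℝ[X] →ₗ[ℝ] ℝ) (a : ℝ) (p : ℝ[X]) : L (C a * p) = a * L p := by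
  rw [C_mul', map_smul, smul_eq_mul]

/-- Integration by parts against the weight `(1 - x²)^α (1 - k²x²)^β`. -/
lemma momentFunctional_pearson {α β k2 : ℝ} (hα : -1 < α) (hk2 : k2 ∈ Set.Ioo (0:ℝ) 1)
    {w : ℝ → ℝ} (hw : ∀ x : ℝ, w x = (1 - x ^ 2) ^ α * (1 - k2 * x ^ 2) ^ β)
    (hint : IntervalIntegrable w volume (-1) 1) (f : ℝ[X]) :
    momentFunctional w hint (sigma k2 * derivative f + 2 * tau α β k2 * f) = 0 := by
  obtain ⟨hk0, hk1⟩ := hk2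
  have hpos : ∀ x ∈ Set.Icc (-1:ℝ) 1, 0 < 1 - k2 * x ^ 2 := by
    intro x hx
    have : x ^ 2 ≤ 1 := by nlinarith [hx.1, hx.2]
    nlinarith
  have key := intervalIntegral.integral_eq_sub_of_hasDerivAt_of_le
    (f := fun x => f.eval x * ((1 - x ^ 2) ^ (α + 1) * (1 - k2 * x ^ 2) ^ (β + 1)))
    (f' := fun x => (sigma k2 * derivative f + 2 * tau α β k2 * f).eval x * w x)
    (a := -1) (b := 1) (by norm_num) ?_ ?_
    (hint.continuousOn_mul (Polynomial.continuous
      (sigma k2 * derivative f + 2 * tau α β k2 * f)).continuousOn)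
  · have h0 : (0:ℝ) ^ (α + 1) = 0 := Real.zero_rpow (by linarith)
    change (∫ x in (-1:ℝ)..1, _) = 0
    rw [key]
    norm_num [h0]
  · refine f.continuous.continuousOn.mul (ContinuousOn.mul ?_ ?_)
    · exact ContinuousOn.rpow_const (by fun_prop) fun x _ => Or.inr (by linarith)
    · exact ContinuousOn.rpow_const (by fun_prop) fun x hx => Or.inl (hpos x hx).ne'
  · intro x hx
    have h1 : 0 < 1 - x ^ 2 := by nlinarith [hx.1, hx.2]
    have h2 := hpos x (Set.Ioo_subset_Icc_self hx)
    have d1 : HasDerivAt (fun x : ℝ => 1 - x ^ 2) (-(2 * x)) x := by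
      simpa using (hasDerivAt_pow 2 x).const_sub 1
    have d2 : HasDerivAt (fun x : ℝ => 1 - k2 * x ^ 2) (-(k2 * (2 * x))) x := by
      simpa using ((hasDerivAt_pow 2 x).const_mul k2).const_sub 1
    have d := (f.hasDerivAt x).mul
      ((d1.rpow_const (p := α + 1) (Or.inl h1.ne')).mul
        (d2.rpow_const (p := β + 1) (Or.inl h2.ne')))
    refine d.congr_deriv ?_
    rw [hw]
    simp only [Pi.mul_apply, add_sub_cancel_right, Real.rpow_add_one h1.ne',
      Real.rpow_add_one h2.ne']
    simp [sigma, tau]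
    ring

section OrthogonalPolynomials

variable {P : ℕ → ℝ[X]} {h b : ℕ → ℝ} {L : ℝ[X] →ₗ[ℝ] ℝ}

lemma coeff_eq_one (hPmonic : ∀ n, (P n).Monic) (hPdeg : ∀ n, (P n).natDegree = n) (n : ℕ) :
    (P n).coeff n = 1 := by
  have := (hPmonic n).coeff_natDegree
  rwa [hPdeg] at this

lemma coeff_eq_zero (hPdeg : ∀ n, (P n).natDegree = n) {n j : ℕ} (hj : n < j) :
    (P n).coeff j = 0 :=
  coeff_eq_zero_of_natDegree_lt (by rwa [hPdeg])

/-- An orthogonal polynomial is orthogonal to all polynomials of lower degree. -/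
lemma map_mul_eq_zero_of_degree_lt (hPmonic : ∀ n, (P n).Monic)
    (hPdeg : ∀ n, (P n).natDegree = n) {m : ℕ} (horth : ∀ n < m, L (P m * P n) = 0) :
    ∀ d ≤ m, ∀ r : ℝ[X], (∀ j, d ≤ j → r.coeff j = 0) → L (P m * r) = 0 := by
  intro d
  induction d with
  | zero =>
    intro _ r hr
    have : r = 0 := by ext j; simpa using hr j (Nat.zero_le j)
    simp [this]
  | succ d ih =>
    intro hd r hr
    have hs := ih (by omega) (r - C (r.coeff d) * P d) (by
      intro j hj
      rw [coeff_sub, coeff_C_mul]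
      rcases hj.eq_or_lt with rfl | hj
      · rw [coeff_eq_one hPmonic hPdeg]; ring
      · rw [coeff_eq_zero hPdeg hj, hr j hj]; ring)
    rw [mul_sub, map_sub, mul_left_comm, map_C_mul, horth d (by omega)] at hs
    linarith

/-- The square norms satisfy `h (n + 1) = b (n + 1) * h n`. -/
lemma norm_succ (horth : ∀ m n : ℕ, L (P m * P n) = if m = n then h n else 0)
    (hrec : ∀ n : ℕ, X * P n = P (n + 1) + C (b n) * P (n - 1)) (n : ℕ) :
    h (n + 1) = b (n + 1) * h n := by
  have e1 : X * P (n + 1) * P n = P (n + 2) * P n + C (b (n + 1)) * (P n * P n) := by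
    rw [hrec (n + 1), Nat.add_sub_cancel]; ring
  have e2 : X * P (n + 1) * P n
      = P (n + 1) * P (n + 1) + C (b n) * (P (n + 1) * P (n - 1)) := by
    rw [mul_assoc, mul_left_comm, hrec n]; ring
  have e := congrArg L (e1.symm.trans e2)
  have hne : n + 1 ≠ n - 1 := by omega
  simpa [map_C_mul, horth, hne] using e.symm

/-- The diagonal matrix entries of multiplication by `σ`. -/
lemma map_sigma_mul_sq (k2 : ℝ) (hb0 : b 0 = 0)
    (horth : ∀ m n : ℕ, L (P m * P n) = if m = n then h n else 0)
    (hrec : ∀ n : ℕ, X * P n = P (n + 1) + C (b n) * P (n - 1)) (m : ℕ) :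
    L (sigma k2 * (P (m + 1) * P (m + 1))) =
      (1 - (1 + k2) * (b (m + 1) + b (m + 2)) + k2 * (b (m + 1) * b m
        + (b (m + 1) + b (m + 2)) ^ 2 + b (m + 2) * b (m + 3))) * h (m + 1) := by
  have e1 : X ^ 2 * P (m + 1) = P (m + 3) + C (b (m + 1) + b (m + 2)) * P (m + 1)
      + C (b (m + 1) * b m) * P (m - 1) := by
    have r1 := hrec (m + 1)
    have r2 := hrec (m + 2)
    have r0 := hrec m
    simp only [Nat.add_sub_cancel, show m + 2 - 1 = m + 1 by omega] at r1 r2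
    simp only [C_add, C_mul]
    linear_combination X * r1 + r2 + C (b (m + 1)) * r0
  have e2 : sigma k2 * (P (m + 1) * P (m + 1)) = P (m + 1) * P (m + 1)
      - C (1 + k2) * (P (m + 1) * (X ^ 2 * P (m + 1)))
      + C k2 * ((X ^ 2 * P (m + 1)) * (X ^ 2 * P (m + 1))) := by
    simp only [sigma, C_add, C_1]; ring
  have e3 : P (m + 1) * (X ^ 2 * P (m + 1)) = P (m + 1) * P (m + 3)
      + C (b (m + 1) + b (m + 2)) * (P (m + 1) * P (m + 1))
      + C (b (m + 1) * b m) * (P (m + 1) * P (m - 1)) := by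
    rw [e1]; ring
  have e4 : (X ^ 2 * P (m + 1)) * (X ^ 2 * P (m + 1)) = P (m + 3) * P (m + 3)
      + C ((b (m + 1) + b (m + 2)) ^ 2) * (P (m + 1) * P (m + 1))
      + C ((b (m + 1) * b m) ^ 2) * (P (m - 1) * P (m - 1))
      + C (2 * (b (m + 1) + b (m + 2))) * (P (m + 1) * P (m + 3))
      + C (2 * (b (m + 1) * b m)) * (P (m + 3) * P (m - 1))
      + C (2 * (b (m + 1) + b (m + 2)) * (b (m + 1) * b m)) * (P (m + 1) * P (m - 1)) := by
    rw [e1]; simp only [C_add, C_mul, C_pow, C_ofNat]; ring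
  have n1 : m + 1 ≠ m - 1 := by omega
  have n2 : m + 3 ≠ m - 1 := by omega
  have hh : (b (m + 1) * b m) ^ 2 * h (m - 1) = b (m + 1) * b m * h (m + 1) := by
    rw [norm_succ horth hrec m]
    cases m with
    | zero => simp [hb0]
    | succ i => rw [norm_succ horth hrec i, Nat.add_sub_cancel]; ring
  have h3 : h (m + 3) = b (m + 3) * (b (m + 2) * h (m + 1)) := by
    rw [norm_succ horth hrec (m + 2), norm_succ horth hrec (m + 1)]
  rw [e2, e3, e4]
  simp only [map_add L, map_sub L, map_C_mul, horth, n1, n2, if_true, if_false,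
    show ¬ (m + 1 = m + 3) by omega]
  rw [hh, h3]
  ring

lemma pearsonOp_eq (α β k2 : ℝ) (p : ℝ[X]) :
    pearsonOp α β k2 p = derivative p + C k2 * (X ^ 3 * (X * derivative p))
      + C (k2 * (α + β + 2)) * (X ^ 3 * p) - C (1 + k2) * (X * (X * derivative p))
      - C (α + 1 + (β + 1) * k2) * (X * p) := by
  simp only [pearsonOp, sigma, tau, C_add, C_mul, C_1, C_ofNat]
  ring

lemma coeff_X_mul_derivative (p : ℝ[X]) (j : ℕ) :
    (X * derivative p).coeff j = j * p.coeff j := by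
  cases j with
  | zero => simp
  | succ j => rw [coeff_X_mul, coeff_derivative]; push_cast; ring

/-- The matrix entry of `σ d/dx + τ` between `P n` and `P (n + 1)`. -/
lemma map_mul_pearsonOp (α β k2 : ℝ) (hPmonic : ∀ n, (P n).Monic)
    (hPdeg : ∀ n, (P n).natDegree = n)
    (horth : ∀ m n : ℕ, L (P m * P n) = if m = n then h n else 0)
    (hsub : ∀ n, (P (n + 1)).coeff n = 0) {p1 : ℕ → ℝ} (hp10 : p1 0 = 0) (hp11 : p1 1 = 0)
    (hp1 : ∀ n : ℕ, p1 (n + 2) = (P (n + 2)).coeff n) (n : ℕ) :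
    L (P (n + 1) * pearsonOp α β k2 (P n)) =
      (k2 * (n + α + β) * p1 n - ((1 + k2) * n + α + 1 + (β + 1) * k2)
        - k2 * (n + α + β + 2) * p1 (n + 3)) * h (n + 1) := by
  set a := k2 * (n + α + β + 2) with ha
  set c := k2 * (n + α + β) * p1 n - ((1 + k2) * n + α + 1 + (β + 1) * k2) - a * p1 (n + 3)
    with hc
  have hz := map_mul_eq_zero_of_degree_lt (L := L) hPmonic hPdeg (m := n + 1)
    (fun j hj => by rw [horth, if_neg (by omega)]) (n + 1) le_rfl
    (pearsonOp α β k2 (P n) - C a * P (n + 3) - C c * P (n + 1)) (by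
      intro j hj
      have top := coeff_eq_one hPmonic hPdeg
      have hd : (derivative (P n)).coeff j = 0 := by
        rw [coeff_derivative, coeff_eq_zero hPdeg (by omega), zero_mul]
      obtain ⟨i, rfl⟩ : ∃ i, j = i + 1 := ⟨j - 1, by omega⟩
      simp only [pearsonOp_eq, coeff_sub, coeff_add, coeff_C_mul, hd, coeff_X_mul,
        coeff_X_mul_derivative, coeff_X_pow_mul']
      obtain rfl | rfl | rfl | hi : i = n ∨ i = n + 1 ∨ i = n + 2 ∨ n + 3 ≤ i := by omega
      · rw [top, top, ← hp1 (i + 1)]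
        match i with
        | 0 => norm_num [hc, hp10]
        | 1 => norm_num [hc, hp11]; ring
        | i + 2 =>
          simp only [show 3 ≤ i + 2 + 1 by omega, if_true, show i + 2 + 1 - 3 = i by omega,
            ← hp1 i, hc, ha]
          push_cast
          ring
      · have e : (P n).coeff (n + 1) = 0 := coeff_eq_zero hPdeg (by omega)
        have e' : (P (n + 1)).coeff (n + 1 + 1) = 0 := coeff_eq_zero hPdeg (by omega)
        rw [e, e', hsub (n + 2)]
        cases n with
        | zero => simp
        | succ n => simp [show n + 1 + 1 + 1 - 3 = n by omega, hsub n]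
      · have e : (P n).coeff (n + 2) = 0 := coeff_eq_zero hPdeg (by omega)
        have e' : (P (n + 1)).coeff (n + 2 + 1) = 0 := coeff_eq_zero hPdeg (by omega)
        rw [e, e', top (n + 3)]
        simp only [show 3 ≤ n + 2 + 1 by omega, if_true, show n + 2 + 1 - 3 = n by omega, top n,
          ha]
        ring
      · have e : (P n).coeff i = 0 := coeff_eq_zero hPdeg (by omega)
        have e1 : (P n).coeff (i + 1 - 3) = 0 := coeff_eq_zero hPdeg (by omega)
        have e2 : (P (n + 1)).coeff (i + 1) = 0 := coeff_eq_zero hPdeg (by omega)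
        have e3 : (P (n + 3)).coeff (i + 1) = 0 := coeff_eq_zero hPdeg (by omega)
        simp only [e, e1, e2, e3, mul_zero, ite_self, add_zero, sub_zero])
  rw [mul_sub, mul_sub, map_sub, map_sub, mul_left_comm, map_C_mul, mul_left_comm, map_C_mul,
    horth, horth, if_neg (by omega), if_pos rfl] at hz
  linarith

end OrthogonalPolynomials

end ReesEquation

/-- The generalized Rees difference equation
`β_{n−1}·C_{n−2} = β_n·C_n + 1` for all `n ≥ 2`. -/
theorem stmt_2
    (α β k2 : ℝ) (hα : -1 < α) (hk2 : k2 ∈ Set.Ioo (0:ℝ) 1)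
    (w : ℝ → ℝ)
    (hw : ∀ x : ℝ, w x = (1 - x ^ 2) ^ α * (1 - k2 * x ^ 2) ^ β)
    (P : ℕ → Polynomial ℝ)
    (hPmonic : ∀ n, (P n).Monic)
    (hPdeg : ∀ n, (P n).natDegree = n)
    (h : ℕ → ℝ) (hpos : ∀ n, 0 < h n)
    (horth : ∀ m n : ℕ,
      (∫ x in (-1:ℝ)..1, (P m).eval x * (P n).eval x * w x)
        = if m = n then h n else 0)
    (b : ℕ → ℝ) (hb0 : b 0 = 0)
    (hrec : ∀ n : ℕ, 1 ≤ n →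
      Polynomial.X * P n = P (n + 1) + Polynomial.C (b n) * P (n - 1))
    (p1 : ℕ → ℝ) (hp10 : p1 0 = 0) (hp11 : p1 1 = 0)
    (hp1 : ∀ n : ℕ, 2 ≤ n → p1 n = (P n).coeff (n - 2)) :
    ∀ n : ℕ, 2 ≤ n →
      b (n - 1) * Caux α β k2 b p1 (n - 2)
        = b n * Caux α β k2 b p1 n + 1 := by
  open Polynomial ReesEquation in
  have hP0 : P 0 = 1 := by
    exact (hPmonic 0).natDegree_eq_zero.mp (hPdeg 0)
  have hint : IntervalIntegrable w volume (-1) 1 := by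
    by_contra hn
    have h0 := horth 0 0
    simp only [hP0, eval_one, one_mul, if_true] at h0
    rw [intervalIntegral.integral_undef hn] at h0
    exact (hpos 0).ne h0
  set L := momentFunctional w hint with hL
  have horthL : ∀ m n : ℕ, L (P m * P n) = if m = n then h n else 0 := by
    intro m n
    rw [← horth m n, hL]
    simp [momentFunctional]
  have hLX : L X = 0 := by
    have hodd := intervalIntegral.integral_comp_neg (a := -1) (b := 1) fun x : ℝ => x * w x
    have hev : ∀ x, w (-x) = w x := fun x => by simp only [hw, neg_sq]
    simp only [hev, neg_mul, neg_neg, intervalIntegral.integral_neg] at hodd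
    have : L X = ∫ x in (-1:ℝ)..1, x * w x := by rw [hL]; simp [momentFunctional]
    linarith
  have hP1 : P 1 = X := by
    have e : P 1 = X + C ((P 1).coeff 0) := by
      have hm := coeff_eq_one hPmonic hPdeg 1
      conv_lhs => rw [eq_X_add_C_of_natDegree_le_one (hPdeg 1).le, hm]
      simp
    have h1 := horthL 1 0
    have h0 := horthL 0 0
    rw [hP0, mul_one] at h0 h1
    rw [e, map_add, hLX, ← mul_one (C _), map_C_mul, h0] at h1
    have hc : (P 1).coeff 0 = 0 := by simpa [(hpos 0).ne'] using h1
    rw [e, hc, C_0, add_zero]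
  have hrec' : ∀ n : ℕ, X * P n = P (n + 1) + C (b n) * P (n - 1) := by
    intro n
    rcases Nat.eq_zero_or_pos n with rfl | hn
    · simp [hP0, hP1, hb0]
    · exact hrec n hn
  have hsub : ∀ n, (P (n + 1)).coeff n = 0 := by
    intro n
    induction n with
    | zero => simp [hP1]
    | succ n ih =>
      have e := congrArg (coeff · (n + 1)) (hrec (n + 1) (by omega))
      simp only [coeff_X_mul, coeff_add, coeff_C_mul, Nat.add_sub_cancel, ih,
        coeff_eq_zero hPdeg (Nat.lt_succ_self n)] at e
      linarith
  have hp1' : ∀ n : ℕ, p1 (n + 2) = (P (n + 2)).coeff n := fun n => hp1 (n + 2) (by omega)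
  have hp1b : ∀ n, p1 (n + 1) = p1 n - b n := by
    intro n
    match n with
    | 0 => simp [hp10, hp11, hb0]
    | 1 =>
      have e := congrArg (coeff · 0) (hrec 1 le_rfl)
      simp only [mul_coeff_zero, coeff_X_zero, zero_mul, coeff_add, Nat.sub_self, hP0,
        coeff_C_zero, mul_one] at e
      rw [hp1' 0, hp11]
      linarith
    | n + 2 =>
      have e := congrArg (coeff · (n + 1)) (hrec (n + 2) (by omega))
      simp only [coeff_X_mul, coeff_add, coeff_C_mul, show n + 2 - 1 = n + 1 by omega,
        coeff_eq_one hPmonic hPdeg (n + 1)] at e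
      rw [hp1' n, hp1' (n + 1)]
      linarith
  intro n hn
  obtain ⟨m, rfl⟩ : ∃ m, n = m + 2 := ⟨n - 2, by omega⟩
  have hD := map_mul_pearsonOp α β k2 hPmonic hPdeg horthL hsub hp10 hp11 hp1'
  have hD0 := hD m
  have hD1 := hD (m + 1)
  have hS := map_sigma_mul_sq k2 hb0 horthL hrec' m
  have hI := momentFunctional_pearson hα hk2 hw hint
  rw [← hL] at hI
  have hanti : L (P m * pearsonOp α β k2 (P (m + 1)))
      = -L (P (m + 1) * pearsonOp α β k2 (P m)) := by
    rw [eq_neg_iff_add_eq_zero, ← map_add, ← hI (P m * P (m + 1))]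
    congr 1
    simp only [pearsonOp, derivative_mul]
    ring
  have hcomm : L (sigma k2 * (P (m + 1) * P (m + 1)))
      + 2 * (L (P (m + 2) * pearsonOp α β k2 (P (m + 1)))
        + b (m + 1) * L (P m * pearsonOp α β k2 (P (m + 1)))) = 0 := by
    have r := hrec' (m + 1)
    rw [Nat.add_sub_cancel] at r
    rw [← map_C_mul, ← map_add, ← map_C_mul, ← map_add,
      ← hI (X * P (m + 1) * P (m + 1))]
    congr 1
    simp only [pearsonOp, derivative_mul, derivative_X, C_ofNat]
    linear_combination
      (-2 * (sigma k2 * derivative (P (m + 1)) + tau α β k2 * P (m + 1))) * r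
  rw [hS, hanti, hD0, hD1, norm_succ horthL hrec' (m + 1)] at hcomm
  have e1 := hp1b m
  have e2 := hp1b (m + 1)
  have e3 := hp1b (m + 2)
  have e4 := hp1b (m + 3)
  refine mul_right_cancel₀ (hpos (m + 1)).ne' ?_
  simp only [Caux, show m + 2 - 1 = m + 1 by omega, Nat.add_sub_cancel]
  simp only [add_assoc, Nat.reduceAdd] at *
  rw [e4, e3, e2, e1] at hcomm
  rw [e2, e1]
  push_cast at hcomm ⊢
  linear_combination (-1) * hcomm
end
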